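/- Let 0 < r < s be real numbers, and define sequences by a₀ = s, b₀ = r, a_{n+1} = (a_n + b_n)/2, b_{n+1} = √(a_n·b_n). Then (a_n) and (b_n) converge to a common limit M > 0 (the arithmetic–geometric mean of s and r), and ∫_0^{π/2} dθ/√(r²·sin²θ + s²·cos²θ) = π/(2M). -/

import Mathlib

open Real Filter

open scoped NNReal

/-!
Landen's substitution `φ = θ + arctan ((r / s) tan θ)` maps `[0, π / 2]` onto `[0, π]` and turns
the integrand of `I(√(rs), (r + s) / 2)` at `φ` into twice the integrand of `I(r, s)` at `θ`. As
the former integrand is symmetric about `π / 2`, this gives `I(√(rs), (r + s) / 2) = I(r, s)`, so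
`I` is constant along the AGM iteration. Since `π / (2s) ≤ I(r, s) ≤ π / (2r)` for `r ≤ s` and both
means tend to the AGM, that constant is `π / (2 AGM)`.
-/

/-- The distance from the origin to the point `(s cos θ, r sin θ)` of the ellipse with semi-axes
`s` and `r`; its reciprocal is the integrand of Gauss's elliptic integral. -/
noncomputable def ellipseRadius (r s θ : ℝ) : ℝ :=
  √(r ^ 2 * sin θ ^ 2 + s ^ 2 * cos θ ^ 2)

/-- Gauss's complete elliptic integral, written `I(r, s)` in the literature. -/
noncomputable def gaussIntegral (r s : ℝ) : ℝ :=
  ∫ θ in (0 : ℝ)..(π / 2), 1 / ellipseRadius r s θ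

/-- The tangent of `θ - arctan ((r / s) tan θ)`, expanded by the subtraction formula so that it is
also meaningful where `tan θ` has its poles. -/
noncomputable def landenSlope (r s θ : ℝ) : ℝ :=
  (s - r) * (sin θ * cos θ) / (r * sin θ ^ 2 + s * cos θ ^ 2)

/-- Landen's substitution `θ + arctan ((r / s) tan θ)`, written as `2θ` minus the angle
`θ - arctan ((r / s) tan θ)`, which makes it smooth on the whole line. -/
noncomputable def landenAngle (r s θ : ℝ) : ℝ :=
  2 * θ - arctan (landenSlope r s θ)

lemma mul_sin_sq_add_mul_cos_sq_pos {x y : ℝ} (hx : 0 < x) (hy : 0 < y) (θ : ℝ) :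
    0 < x * sin θ ^ 2 + y * cos θ ^ 2 := by
  have hmin := Convex.min_le_combo x y (sq_nonneg (sin θ)) (sq_nonneg (cos θ))
    (sin_sq_add_cos_sq θ)
  simp only [smul_eq_mul] at hmin
  linarith [lt_min hx hy]

lemma continuous_ellipseRadius (r s : ℝ) : Continuous (ellipseRadius r s) := by
  unfold ellipseRadius
  fun_prop

lemma ellipseRadius_pi_sub (r s θ : ℝ) : ellipseRadius r s (π - θ) = ellipseRadius r s θ := by
  simp [ellipseRadius]

lemma ellipseRadius_sq (r s θ : ℝ) :
    ellipseRadius r s θ ^ 2 = r ^ 2 * sin θ ^ 2 + s ^ 2 * cos θ ^ 2 :=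
  sq_sqrt (by positivity)

lemma le_ellipseRadius {r s : ℝ} (hr : 0 ≤ r) (hrs : r ≤ s) (θ : ℝ) : r ≤ ellipseRadius r s θ := by
  apply le_sqrt_of_sq_le
  calc r ^ 2 = r ^ 2 * sin θ ^ 2 + r ^ 2 * cos θ ^ 2 := by
        rw [← mul_add, sin_sq_add_cos_sq, mul_one]
    _ ≤ r ^ 2 * sin θ ^ 2 + s ^ 2 * cos θ ^ 2 := by gcongr

lemma ellipseRadius_le {r s : ℝ} (hr : 0 ≤ r) (hrs : r ≤ s) (θ : ℝ) : ellipseRadius r s θ ≤ s := by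
  rw [ellipseRadius, sqrt_le_left (hr.trans hrs)]
  calc r ^ 2 * sin θ ^ 2 + s ^ 2 * cos θ ^ 2 ≤ s ^ 2 * sin θ ^ 2 + s ^ 2 * cos θ ^ 2 := by gcongr
    _ = s ^ 2 := by rw [← mul_add, sin_sq_add_cos_sq, mul_one]

lemma landenAngle_zero (r s : ℝ) : landenAngle r s 0 = 0 := by
  simp [landenAngle, landenSlope]

lemma landenAngle_pi_div_two (r s : ℝ) : landenAngle r s (π / 2) = π := by
  simp [landenAngle, landenSlope, mul_div_cancel₀]

section

variable {r s : ℝ}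

lemma ellipseRadius_pos (hr : 0 < r) (hs : 0 < s) (θ : ℝ) : 0 < ellipseRadius r s θ :=
  sqrt_pos.2 (mul_sin_sq_add_mul_cos_sq_pos (by positivity) (by positivity) θ)

lemma continuous_one_div_ellipseRadius (hr : 0 < r) (hs : 0 < s) :
    Continuous fun θ ↦ 1 / ellipseRadius r s θ :=
  continuous_const.div (continuous_ellipseRadius r s) fun θ ↦ (ellipseRadius_pos hr hs θ).ne'

lemma one_add_landenSlope_sq (hr : 0 < r) (hs : 0 < s) (θ : ℝ) :
    1 + landenSlope r s θ ^ 2 =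
      (ellipseRadius r s θ / (r * sin θ ^ 2 + s * cos θ ^ 2)) ^ 2 := by
  have hE := mul_sin_sq_add_mul_cos_sq_pos hr hs θ
  rw [landenSlope, div_pow _ _ 2, div_pow _ _ 2, ellipseRadius_sq]
  field_simp
  linear_combination (r ^ 2 * sin θ ^ 2 + s ^ 2 * cos θ ^ 2) * sin_sq_add_cos_sq θ

lemma sqrt_one_add_landenSlope_sq (hr : 0 < r) (hs : 0 < s) (θ : ℝ) :
    √(1 + landenSlope r s θ ^ 2) = ellipseRadius r s θ / (r * sin θ ^ 2 + s * cos θ ^ 2) := by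
  have hE := mul_sin_sq_add_mul_cos_sq_pos hr hs θ
  have hR := ellipseRadius_pos hr hs θ
  rw [one_add_landenSlope_sq hr hs, sqrt_sq (by positivity)]

lemma cos_arctan_landenSlope (hr : 0 < r) (hs : 0 < s) (θ : ℝ) :
    cos (arctan (landenSlope r s θ)) =
      (r * sin θ ^ 2 + s * cos θ ^ 2) / ellipseRadius r s θ := by
  rw [cos_arctan, sqrt_one_add_landenSlope_sq hr hs, one_div_div]

lemma sin_arctan_landenSlope (hr : 0 < r) (hs : 0 < s) (θ : ℝ) :
    sin (arctan (landenSlope r s θ)) = (s - r) * (sin θ * cos θ) / ellipseRadius r s θ := by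
  rw [sin_arctan, sqrt_one_add_landenSlope_sq hr hs, landenSlope,
    div_div_div_cancel_right₀ (mul_sin_sq_add_mul_cos_sq_pos hr hs θ).ne']

lemma sin_landenAngle (hr : 0 < r) (hs : 0 < s) (θ : ℝ) :
    sin (landenAngle r s θ) = (r + s) * (sin θ * cos θ) / ellipseRadius r s θ := by
  rw [landenAngle, sin_sub, sin_two_mul, cos_two_mul', cos_arctan_landenSlope hr hs,
    sin_arctan_landenSlope hr hs]
  linear_combination (r + s) * (sin θ * cos θ) / ellipseRadius r s θ * sin_sq_add_cos_sq θ

lemma cos_landenAngle (hr : 0 < r) (hs : 0 < s) (θ : ℝ) :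
    cos (landenAngle r s θ) = (s * cos θ ^ 2 - r * sin θ ^ 2) / ellipseRadius r s θ := by
  rw [landenAngle, cos_sub, sin_two_mul, cos_two_mul', cos_arctan_landenSlope hr hs,
    sin_arctan_landenSlope hr hs]
  linear_combination
    (s * cos θ ^ 2 - r * sin θ ^ 2) / ellipseRadius r s θ * sin_sq_add_cos_sq θ

lemma hasDerivAt_landenSlope (hr : 0 < r) (hs : 0 < s) (θ : ℝ) :
    HasDerivAt (landenSlope r s)
      ((ellipseRadius r s θ ^ 2 - r * s) / (r * sin θ ^ 2 + s * cos θ ^ 2) ^ 2) θ := by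
  have hnum := ((hasDerivAt_sin θ).fun_mul (hasDerivAt_cos θ)).const_mul (s - r)
  have hden := (((hasDerivAt_sin θ).fun_pow 2).const_mul r).fun_add
    (((hasDerivAt_cos θ).fun_pow 2).const_mul s)
  refine (hnum.fun_div hden (mul_sin_sq_add_mul_cos_sq_pos hr hs θ).ne').congr_deriv ?_
  rw [ellipseRadius_sq]
  congr 1
  push_cast
  linear_combination
    ((s - r) * (s * cos θ ^ 2 - r * sin θ ^ 2) - r * s) * sin_sq_add_cos_sq θ

lemma hasDerivAt_landenAngle (hr : 0 < r) (hs : 0 < s) (θ : ℝ) :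
    HasDerivAt (landenAngle r s) (1 + r * s / ellipseRadius r s θ ^ 2) θ := by
  have hE := mul_sin_sq_add_mul_cos_sq_pos hr hs θ
  have hR := ellipseRadius_pos hr hs θ
  have hdouble := (hasDerivAt_id θ).const_mul 2
  refine (hdouble.fun_sub (hasDerivAt_landenSlope hr hs θ).arctan).congr_deriv ?_
  rw [one_add_landenSlope_sq hr hs]
  field_simp
  ring

lemma ellipseRadius_landenAngle (hr : 0 < r) (hs : 0 < s) (θ : ℝ) :
    ellipseRadius √(r * s) ((r + s) / 2) (landenAngle r s θ) =
      (r + s) / 2 * (r * sin θ ^ 2 + s * cos θ ^ 2) / ellipseRadius r s θ := by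
  have hE := mul_sin_sq_add_mul_cos_sq_pos hr hs θ
  have hR := ellipseRadius_pos hr hs θ
  rw [← sqrt_sq (x := _ / ellipseRadius r s θ) (by positivity), ellipseRadius,
    sin_landenAngle hr hs, cos_landenAngle hr hs, sq_sqrt (by positivity)]
  congr 1
  ring

lemma one_div_ellipseRadius_landenAngle_mul_deriv (hr : 0 < r) (hs : 0 < s) (θ : ℝ) :
    1 / ellipseRadius √(r * s) ((r + s) / 2) (landenAngle r s θ) *
      (1 + r * s / ellipseRadius r s θ ^ 2) = 2 * (1 / ellipseRadius r s θ) := by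
  have hE := mul_sin_sq_add_mul_cos_sq_pos hr hs θ
  have hR := ellipseRadius_pos hr hs θ
  have hfactor : ellipseRadius r s θ ^ 2 + r * s =
      (r + s) * (r * sin θ ^ 2 + s * cos θ ^ 2) := by
    rw [ellipseRadius_sq]
    linear_combination -(r * s) * sin_sq_add_cos_sq θ
  rw [ellipseRadius_landenAngle hr hs]
  field_simp
  exact hfactor

lemma integral_one_div_ellipseRadius_zero_pi (hr : 0 < r) (hs : 0 < s) :
    ∫ θ in (0 : ℝ)..π, 1 / ellipseRadius r s θ = 2 * gaussIntegral r s := by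
  have hint (a b : ℝ) := (continuous_one_div_ellipseRadius hr hs).intervalIntegrable
    (μ := MeasureTheory.volume) a b
  have hreflect : ∫ θ in (π / 2)..π, 1 / ellipseRadius r s θ = gaussIntegral r s := by
    have h := intervalIntegral.integral_comp_sub_left (a := 0) (b := π / 2)
      (fun θ ↦ 1 / ellipseRadius r s θ) π
    simp only [ellipseRadius_pi_sub, sub_zero, sub_half] at h
    exact h.symm
  rw [← intervalIntegral.integral_add_adjacent_intervals (hint 0 (π / 2)) (hint (π / 2) π),
    hreflect, two_mul, gaussIntegral]

lemma gaussIntegral_sqrt_mul_half_add (hr : 0 < r) (hs : 0 < s) :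
    gaussIntegral √(r * s) ((r + s) / 2) = gaussIntegral r s := by
  have hcont : Continuous fun θ ↦ 1 + r * s / ellipseRadius r s θ ^ 2 :=
    continuous_const.add (continuous_const.div ((continuous_ellipseRadius r s).pow 2)
      fun θ ↦ (pow_pos (ellipseRadius_pos hr hs θ) 2).ne')
  have hsubst := intervalIntegral.integral_comp_mul_deriv (a := 0) (b := π / 2)
    (fun θ _ ↦ hasDerivAt_landenAngle hr hs θ) hcont.continuousOn
    (continuous_one_div_ellipseRadius (sqrt_pos.2 (mul_pos hr hs)) (half_pos (add_pos hr hs)))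
  simp only [Function.comp_apply, one_div_ellipseRadius_landenAngle_mul_deriv hr hs,
    landenAngle_zero, landenAngle_pi_div_two, intervalIntegral.integral_const_mul] at hsubst
  rw [integral_one_div_ellipseRadius_zero_pi (by positivity) (by positivity)] at hsubst
  exact (mul_left_cancel₀ two_ne_zero hsubst).symm

lemma pi_div_two_mul_le_gaussIntegral (hr : 0 < r) (hrs : r ≤ s) :
    π / (2 * s) ≤ gaussIntegral r s := by
  have hs := hr.trans_le hrs
  calc π / (2 * s) = ∫ _ in (0 : ℝ)..(π / 2), 1 / s := by
        rw [intervalIntegral.integral_const, smul_eq_mul]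
        ring
    _ ≤ gaussIntegral r s :=
      intervalIntegral.integral_mono (by positivity) intervalIntegrable_const
        ((continuous_one_div_ellipseRadius hr hs).intervalIntegrable _ _) fun θ ↦
          one_div_le_one_div_of_le (ellipseRadius_pos hr hs θ) (ellipseRadius_le hr.le hrs θ)

lemma gaussIntegral_le_pi_div_two_mul (hr : 0 < r) (hrs : r ≤ s) :
    gaussIntegral r s ≤ π / (2 * r) := by
  have hs := hr.trans_le hrs
  calc gaussIntegral r s ≤ ∫ _ in (0 : ℝ)..(π / 2), 1 / r :=
      intervalIntegral.integral_mono (by positivity)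
        ((continuous_one_div_ellipseRadius hr hs).intervalIntegrable _ _)
        intervalIntegrable_const fun θ ↦
          one_div_le_one_div_of_le hr (le_ellipseRadius hr.le hrs θ)
    _ = π / (2 * r) := by
      rw [intervalIntegral.integral_const, smul_eq_mul]
      ring

end

section

variable {x y : ℝ≥0}

lemma agmSequences_fst_pos (hx : 0 < x) (hy : 0 < y) (n : ℕ) :
    0 < (NNReal.agmSequences x y n).1 :=
  (NNReal.sqrt_pos.2 (mul_pos hx hy)).trans_le (NNReal.agmSequences_fst_monotone n.zero_le)

lemma gaussIntegral_agmSequences (hx : 0 < x) (hy : 0 < y) (n : ℕ) :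
    gaussIntegral (NNReal.agmSequences x y n).1 (NNReal.agmSequences x y n).2 =
      gaussIntegral x y := by
  have hstep {x y : ℝ≥0} (hx : 0 < x) (hy : 0 < y) :
      gaussIntegral (NNReal.sqrt (x * y)) ((x + y) / 2 : ℝ≥0) = gaussIntegral x y := by
    push_cast
    exact gaussIntegral_sqrt_mul_half_add (by exact_mod_cast hx) (by exact_mod_cast hy)
  induction n generalizing x y with
  | zero => exact hstep hx hy
  | succ n ih => rw [NNReal.agmSequences_succ, ih (by positivity) (by positivity), hstep hx hy]

theorem gaussIntegral_eq_pi_div_two_mul_agm (hx : 0 < x) (hy : 0 < y) :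
    gaussIntegral x y = π / (2 * NNReal.agm x y) := by
  have htendsto {u : ℕ → ℝ≥0} (hu : Tendsto u atTop (nhds (NNReal.agm x y))) :
      Tendsto (fun n ↦ π / (2 * (u n : ℝ))) atTop (nhds (π / (2 * NNReal.agm x y))) :=
    have hM : (0 : ℝ) < NNReal.agm x y := NNReal.agm_pos hx hy
    tendsto_const_nhds.div ((NNReal.tendsto_coe.2 hu).const_mul 2) (by positivity)
  have hfst (n : ℕ) : (0 : ℝ) < (NNReal.agmSequences x y n).1 := agmSequences_fst_pos hx hy n
  have hle (n : ℕ) : ((NNReal.agmSequences x y n).1 : ℝ) ≤ (NNReal.agmSequences x y n).2 :=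
    NNReal.agmSequences_fst_le_snd n n
  apply le_antisymm
  · refine ge_of_tendsto' (htendsto NNReal.tendsto_agmSequences_fst_agm) fun n ↦ ?_
    rw [← gaussIntegral_agmSequences hx hy n]
    exact gaussIntegral_le_pi_div_two_mul (hfst n) (hle n)
  · refine le_of_tendsto' (htendsto NNReal.tendsto_agmSequences_snd_agm) fun n ↦ ?_
    rw [← gaussIntegral_agmSequences hx hy n]
    exact pi_div_two_mul_le_gaussIntegral (hfst n) (hle n)

-- `NNReal.agmSequences` omits the starting pair, hence the shift by one.
lemma eq_agmSequences_of_recurrence {a b : ℕ → ℝ} (ha0 : a 0 = y) (hb0 : b 0 = x)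
    (ha : ∀ n, a (n + 1) = (a n + b n) / 2) (hb : ∀ n, b (n + 1) = √(a n * b n)) (n : ℕ) :
    a (n + 1) = (NNReal.agmSequences x y n).2 ∧ b (n + 1) = (NNReal.agmSequences x y n).1 := by
  induction n with
  | zero => simp [ha, hb, ha0, hb0, add_comm, mul_comm]
  | succ n ih =>
    rw [ha (n + 1), hb (n + 1), ih.1, ih.2, NNReal.agmSequences_succ']
    simp [add_comm, mul_comm]

end

theorem stmt_11_general (r s : ℝ) (hr : 0 < r) (hs : 0 < s) (a b : ℕ → ℝ)
    (ha0 : a 0 = s) (hb0 : b 0 = r)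
    (ha : ∀ n, a (n + 1) = (a n + b n) / 2)
    (hb : ∀ n, b (n + 1) = √(a n * b n)) :
    ∃ M : ℝ, 0 < M ∧ Tendsto a atTop (nhds M) ∧ Tendsto b atTop (nhds M) ∧
      (∫ θ in (0 : ℝ)..(π / 2), 1 / √(r ^ 2 * sin θ ^ 2 + s ^ 2 * cos θ ^ 2)) = π / (2 * M) := by
  lift r to ℝ≥0 using hr.le
  lift s to ℝ≥0 using hs.le
  rw [NNReal.coe_pos] at hr hs
  have hseq := eq_agmSequences_of_recurrence ha0 hb0 ha hb
  refine ⟨NNReal.agm r s, NNReal.agm_pos hr hs, ?_, ?_, gaussIntegral_eq_pi_div_two_mul_agm hr hs⟩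
  · rw [← tendsto_add_atTop_iff_nat 1]
    simpa only [hseq] using NNReal.tendsto_coe.2 NNReal.tendsto_agmSequences_snd_agm
  · rw [← tendsto_add_atTop_iff_nat 1]
    simpa only [hseq] using NNReal.tendsto_coe.2 NNReal.tendsto_agmSequences_fst_agm

/-- For `0 < r < s`, the AGM sequences `a₀ = s`, `b₀ = r`, `a_{n+1} = (a_n + b_n)/2`,
`b_{n+1} = √(a_n b_n)` converge to a common limit `M > 0`, and
`∫_0^{π/2} dθ/√(r²sin²θ + s²cos²θ) = π/(2M)`. -/
theorem stmt_11 (r s : ℝ) (hr : 0 < r) (hrs : r < s) (a b : ℕ → ℝ)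
    (ha0 : a 0 = s) (hb0 : b 0 = r)
    (ha : ∀ n, a (n + 1) = (a n + b n) / 2)
    (hb : ∀ n, b (n + 1) = Real.sqrt (a n * b n)) :
    ∃ M : ℝ, 0 < M ∧ Tendsto a atTop (nhds M) ∧ Tendsto b atTop (nhds M) ∧
      (∫ θ in (0:ℝ)..(π / 2),
          1 / Real.sqrt (r ^ 2 * Real.sin θ ^ 2 + s ^ 2 * Real.cos θ ^ 2)) =
        π / (2 * M) :=
  stmt_11_general r s hr (hr.trans hrs) a b ha0 hb0 ha hb
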